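/- arXiv:2502.06718 — 4 statements merged into one kernel-verified Lean document; each statement's English description precedes it below -/
import Mathlib

section
/- For every tuple (a,b,c,d,e,f) ∈ F^6, the number of tuples such that X(a,b,c,d,e,f)^6 ≠ 0 (equivalently, such that X(a,b,c,d,e,f) is a regular nilpotent matrix, i.e. has Jordan type the partition (7)) equals q^4·(q−1)^2. -/
/-!
The matrix `X = X(a,b,c,d,e,f)` is strictly upper triangular with superdiagonal
`(a, f, 2a, a, f, a)`. The sixth power of a strictly upper triangular `7 × 7` matrix has at most
one nonzero entry, the top right one, equal to the product of the superdiagonal. Hence `X ^ 6`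
is `2 a ^ 4 f ^ 2` in that corner and zero elsewhere (`g2X_pow_six`). As the characteristic
is not `2`, `X ^ 6 ≠ 0` exactly when `a ≠ 0` and `f ≠ 0`, while `b, c, d, e` are free; this gives
`(q - 1) * q ^ 4 * (q - 1)` tuples.
-/

/-- The image of the general nilpotent element
`a·e_{α₁} + b·e_{α₁+α₂} + c·e_{2α₁+α₂} + d·e_{3α₁+α₂} + e·e_{3α₁+2α₂} + f·e_{α₂}`
of the Lie algebra `g₂` over `F` in its faithful 7-dimensional representation. -/
noncomputable def g2X {F : Type*} [Field F] (a b c d e f : F) :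
    Matrix (Fin 7) (Fin 7) F :=
  !![0, a, b, 2*c, d, e, 0;
     0, 0, f, -2*b, -c, 0, e;
     0, 0, 0, 2*a, 0, -c, -d;
     0, 0, 0, 0, a, b, c;
     0, 0, 0, 0, 0, f, -b;
     0, 0, 0, 0, 0, 0, a;
     0, 0, 0, 0, 0, 0, 0]

/-- `M` is supported on and above its `k`-th superdiagonal. -/
def SupportedFrom {n : ℕ} {F : Type*} [Field F] (k : ℕ) (M : Matrix (Fin n) (Fin n) F) : Prop :=
  ∀ i j : Fin n, (j : ℕ) < i + k → M i j = 0

theorem SupportedFrom.mul {n k l : ℕ} {F : Type*} [Field F] {M N : Matrix (Fin n) (Fin n) F}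
    (hM : SupportedFrom k M) (hN : SupportedFrom l N) : SupportedFrom (k + l) (M * N) := by
  intro i j hij
  rw [Matrix.mul_apply]
  refine Finset.sum_eq_zero fun m _ => ?_
  by_cases h : (m : ℕ) < i + k
  · rw [hM i m h, zero_mul]
  · rw [hN m j (by omega), mul_zero]

/-- Only one summand contributes to an entry of the lowest superdiagonal of a product. -/
theorem SupportedFrom.mul_entry {n k l : ℕ} {F : Type*} [Field F]
    {M N : Matrix (Fin n) (Fin n) F} (hM : SupportedFrom k M) (hN : SupportedFrom l N)
    (i m j : Fin n) (hm : (m : ℕ) = i + k) (hj : (j : ℕ) = m + l) :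
    (M * N) i j = M i m * N m j := by
  rw [Matrix.mul_apply]
  refine Finset.sum_eq_single m (fun r _ hr => ?_) (fun h => absurd (Finset.mem_univ m) h)
  by_cases h : (r : ℕ) < i + k
  · rw [hM i r h, zero_mul]
  · have hne : (r : ℕ) ≠ m := fun h' => hr (Fin.ext h')
    rw [hN r j (by omega), mul_zero]

theorem g2X_supportedFrom {F : Type*} [Field F] (a b c d e f : F) :
    SupportedFrom 1 (g2X a b c d e f) := by
  intro i j h
  fin_cases i <;> fin_cases j <;> first | rfl | (simp at h)

theorem g2X_pow_six {F : Type*} [Field F] (a b c d e f : F) :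
    g2X a b c d e f ^ 6 = Matrix.single 0 6 (2 * a ^ 4 * f ^ 2) := by
  have h1 := g2X_supportedFrom a b c d e f
  have e01 : g2X a b c d e f 0 1 = a := rfl
  have e12 : g2X a b c d e f 1 2 = f := rfl
  have e23 : g2X a b c d e f 2 3 = 2 * a := rfl
  have e34 : g2X a b c d e f 3 4 = a := rfl
  have e45 : g2X a b c d e f 4 5 = f := rfl
  have e56 : g2X a b c d e f 5 6 = a := rfl
  generalize g2X a b c d e f = X at *
  have h2 := h1.mul h1
  have h3 := h2.mul h1
  have h6 := h3.mul h3
  have hX : X ^ 6 = X * X * X * (X * X * X) := by noncomm_ring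
  have corner : (X * X * X * (X * X * X)) 0 6 = 2 * a ^ 4 * f ^ 2 := by
    rw [h3.mul_entry h3 0 3 6 rfl rfl, h2.mul_entry h1 0 2 3 rfl rfl,
      h2.mul_entry h1 3 5 6 rfl rfl, h1.mul_entry h1 0 1 2 rfl rfl,
      h1.mul_entry h1 3 4 5 rfl rfl, e01, e12, e23, e34, e45, e56]
    ring
  rw [hX]
  ext i j
  by_cases h : i = 0 ∧ j = 6
  · obtain ⟨rfl, rfl⟩ := h
    rw [corner, Matrix.single_apply_same]
  · exact (h6 i j (by omega)).trans (Matrix.single_apply_of_ne _ _ _ _ _ (by tauto)).symm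

/-- The number of tuples `(a,b,c,d,e,f) ∈ F^6` such that `X(a,b,c,d,e,f)^6 ≠ 0`
(i.e. `X` is a regular nilpotent matrix, of Jordan type `(7)`) equals `q^4·(q−1)^2`. -/
theorem g2_kirillov_seven (F : Type*) [Field F] [Fintype F]
    (q : ℕ) (hq : Fintype.card F = q) (hchar : 3 < ringChar F) :
    {v : F × F × F × F × F × F |
        (g2X v.1 v.2.1 v.2.2.1 v.2.2.2.1 v.2.2.2.2.1 v.2.2.2.2.2) ^ 6 ≠ 0}.ncard =
      q ^ 4 * (q - 1) ^ 2 := by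
  have h2 : (2 : F) ≠ 0 := Ring.two_ne_zero (by omega)
  have hset : {v : F × F × F × F × F × F |
      (g2X v.1 v.2.1 v.2.2.1 v.2.2.2.1 v.2.2.2.2.1 v.2.2.2.2.2) ^ 6 ≠ 0} =
      ({0}ᶜ : Set F) ×ˢ (Set.univ : Set F) ×ˢ (Set.univ : Set F) ×ˢ (Set.univ : Set F) ×ˢ
        (Set.univ : Set F) ×ˢ ({0}ᶜ : Set F) := by
    ext ⟨a, b, c, d, e, f⟩
    have hs : ∀ x : F, Matrix.single (0 : Fin 7) (6 : Fin 7) x = 0 ↔ x = 0 := fun x =>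
      ⟨fun h => by simpa using congrFun (congrFun h 0) 6, fun h => by simp [h]⟩
    simp [g2X_pow_six, hs, h2]
  have hc : ({0}ᶜ : Set F).ncard = q - 1 := by
    rw [Set.ncard_compl, Set.ncard_singleton, Nat.card_eq_fintype_card, hq]
  have hu : (Set.univ : Set F).ncard = q := by
    rw [Set.ncard_univ, Nat.card_eq_fintype_card, hq]
  rw [hset]
  simp only [Set.ncard_prod, hc, hu]
  ring
end

section
/- The number of tuples (a,b,c,d,e,f) ∈ F^6 such that X = X(a,b,c,d,e,f) satisfies rank X = 4, rank X² = 2, and X³ = 0 (equivalently, X has Jordan type the partition (3,3,1)) equals q²·(q−1)²·(1+2q). -/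
/-! ### Rank criteria -/

/-- A factorisation `A = B * M * C` through `Fin k` bounds `rank A` by `rank M`, and a product
`P * A * Q` that is invertible whenever `M` is gives the opposite inequality. -/
theorem g2_rank_iff {F : Type*} [Field F] {k : ℕ} {A : Matrix (Fin 7) (Fin 7) F}
    (B : Matrix (Fin 7) (Fin k) F) (M : Matrix (Fin k) (Fin k) F) (C : Matrix (Fin k) (Fin 7) F)
    (P : Matrix (Fin k) (Fin 7) F) (Q : Matrix (Fin 7) (Fin k) F)
    (hA : A = B * M * C) (hM : M.det ≠ 0 → (P * A * Q).det ≠ 0) :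
    A.rank = k ↔ M.det ≠ 0 := by
  have h1 : A.rank ≤ M.rank := by
    rw [hA]
    exact (Matrix.rank_mul_le_left _ _).trans (Matrix.rank_mul_le_right _ _)
  have h2 : M.rank ≤ k := M.rank_le_width
  constructor
  · intro h hd
    obtain ⟨v, hv, hv0⟩ := Matrix.exists_mulVec_eq_zero_iff.2 hd
    have h3 : M.rank = k := by omega
    have h4 := LinearMap.finrank_range_add_finrank_ker M.mulVecLin
    rw [← Matrix.rank, h3, Module.finrank_fin_fun] at h4
    have h5 : LinearMap.ker M.mulVecLin = ⊥ := by
      apply Submodule.finrank_eq_zero.1; omega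
    exact hv ((LinearMap.ker_eq_bot'.1 h5) v hv0)
  · intro h
    have h3 := Matrix.rank_of_isUnit (P * A * Q)
      ((Matrix.isUnit_iff_isUnit_det _).2 (isUnit_iff_ne_zero.2 (hM h)))
    rw [Fintype.card_fin] at h3
    have h4 : (P * A * Q).rank ≤ A.rank :=
      (Matrix.rank_mul_le_left _ _).trans (Matrix.rank_mul_le_right _ _)
    omega

theorem g2X_sq {F : Type*} [Field F] (a b c d e f : F) :
    g2X a b c d e f ^ 2 =
    !![0, 0, a*f, 0, a*c, b*c+d*f, 2*(a*e-b*d+c^2);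
     0, 0, 0, 2*a*f, -(2*a*b), -(2*(b^2+c*f)), -(b*c+d*f);
     0, 0, 0, 0, 2*a^2, 2*a*b, a*c;
     0, 0, 0, 0, 0, a*f, 0;
     0, 0, 0, 0, 0, 0, a*f;
     0, 0, 0, 0, 0, 0, 0;
     0, 0, 0, 0, 0, 0, 0] := by
  ext i j
  fin_cases i <;> fin_cases j <;>
    simp [g2X, pow_two, Matrix.mul_apply, Fin.sum_univ_succ] <;> ring

theorem g2X_cube {F : Type*} [Field F] (a b c d e f : F) :
    g2X a b c d e f ^ 3 =
    (a^2*f) • !![0, 0, 0, 2, 0, 0, 0;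
     0, 0, 0, 0, 2, 0, 0;
     0, 0, 0, 0, 0, 2, 0;
     0, 0, 0, 0, 0, 0, 1;
     0, 0, 0, 0, 0, 0, 0;
     0, 0, 0, 0, 0, 0, 0;
     0, 0, 0, 0, 0, 0, 0] := by
  rw [pow_succ, g2X_sq]
  ext i j
  fin_cases i <;> fin_cases j <;>
    simp [g2X, Matrix.mul_apply, Fin.sum_univ_succ] <;> ring

/-! ### Ranks on the two branches `a = 0` and `a ≠ 0, f = 0` -/

/-- For `a = 0` the matrix `X` consists of a `2 × 3` block `U` (rows 1, 2, columns 3, 4, 5), a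
`3 × 2` block `V` (rows 3, 4, 5, columns 6, 7) and the corner `e`, and `U V` is the only nonzero
block of `X²`. If `U V` is invertible then so is the block triangular product
`diag(1, U) X diag(V, 1)`, which has diagonal blocks `U V`, `U V`. -/
theorem g2X_rank_of_a_zero {F : Type*} [Field F] (b c d e f : F)
    (h : (b*c+d*f)^2 ≠ 4*(b^2+c*f)*(c^2-b*d)) : (g2X 0 b c d e f).rank = 4 := by
  refine (g2_rank_iff (k := 4)
    !![1, 0, 0, 0; 0, 1, 0, 0; 0, 0, -c, -d; 0, 0, b, c; 0, 0, f, -b; 0, 0, 0, 0; 0, 0, 0, 0]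
    1
    !![0, 0, b, 2*c, d, e, 0; 0, 0, f, -2*b, -c, 0, e; 0, 0, 0, 0, 0, 1, 0; 0, 0, 0, 0, 0, 0, 1]
    !![1, 0, 0, 0, 0, 0, 0; 0, 1, 0, 0, 0, 0, 0; 0, 0, b, 2*c, d, 0, 0; 0, 0, f, -2*b, -c, 0, 0]
    !![0, 0, 0, 0; 0, 0, 0, 0; -c, -d, 0, 0; b, c, 0, 0; f, -b, 0, 0; 0, 0, 1, 0; 0, 0, 0, 1]
    ?_ ?_).2 (by simp)
  · ext i j
    fin_cases i <;> fin_cases j <;> simp [g2X, Matrix.mul_apply, Fin.sum_univ_succ]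
  · intro _
    have key : (!![1, 0, 0, 0, 0, 0, 0; 0, 1, 0, 0, 0, 0, 0; 0, 0, b, 2*c, d, 0, 0;
          0, 0, f, -2*b, -c, 0, 0] * g2X 0 b c d e f *
        !![0, 0, 0, 0; 0, 0, 0, 0; -c, -d, 0, 0; b, c, 0, 0; f, -b, 0, 0; 0, 0, 1, 0; 0, 0, 0, 1])
        = !![b*c+d*f, 2*(c^2-b*d), e, 0; -(2*(b^2+c*f)), -(b*c+d*f), 0, e;
            0, 0, b*c+d*f, 2*(c^2-b*d); 0, 0, -(2*(b^2+c*f)), -(b*c+d*f)] := by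
      ext i j
      fin_cases i <;> fin_cases j <;> simp [g2X, Matrix.mul_apply, Fin.sum_univ_succ] <;> ring
    have hd : (!![b*c+d*f, 2*(c^2-b*d), e, 0; -(2*(b^2+c*f)), -(b*c+d*f), 0, e;
            0, 0, b*c+d*f, 2*(c^2-b*d); 0, 0, -(2*(b^2+c*f)), -(b*c+d*f)] : Matrix _ _ F).det
        = ((b*c+d*f)^2 - 4*(b^2+c*f)*(c^2-b*d))^2 := by
      simp [Matrix.det_succ_row_zero, Fin.sum_univ_succ, Fin.succAbove]
      ring
    rw [key, hd]
    exact pow_ne_zero _ (sub_ne_zero.2 h)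

/-- The condition says that the discriminant of the binary cubic with coefficients
`f, 3b, -3c, d` does not vanish; up to sign the difference of its two sides is the
determinant of the nonzero `2 × 2` block of `X²`. -/
theorem g2X_sq_rank_of_a_zero {F : Type*} [Field F] (b c d e f : F) :
    (g2X 0 b c d e f ^ 2).rank = 2 ↔ (b*c+d*f)^2 ≠ 4*(b^2+c*f)*(c^2-b*d) := by
  have hd : (!![b*c+d*f, 2*(c^2-b*d); -(2*(b^2+c*f)), -(b*c+d*f)] : Matrix _ _ F).det
      = - ((b*c+d*f)^2 - 4*(b^2+c*f)*(c^2-b*d)) := by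
    rw [Matrix.det_fin_two_of]; ring
  refine (g2_rank_iff (k := 2) !![1, 0; 0, 1; 0, 0; 0, 0; 0, 0; 0, 0; 0, 0]
    !![b*c+d*f, 2*(c^2-b*d); -(2*(b^2+c*f)), -(b*c+d*f)]
    !![0, 0, 0, 0, 0, 1, 0; 0, 0, 0, 0, 0, 0, 1]
    !![1, 0, 0, 0, 0, 0, 0; 0, 1, 0, 0, 0, 0, 0]
    !![0, 0; 0, 0; 0, 0; 0, 0; 0, 0; 1, 0; 0, 1] ?_ ?_).trans ?_
  · rw [g2X_sq]
    ext i j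
    fin_cases i <;> fin_cases j <;> simp [Matrix.mul_apply, Fin.sum_univ_succ]
    exact Or.inl (by ring)
  · intro h
    convert h
    rw [g2X_sq]
    ext i j
    fin_cases i <;> fin_cases j <;> simp [Matrix.mul_apply, Fin.sum_univ_succ]
    exact Or.inl (by ring)
  · rw [hd, neg_ne_zero, sub_ne_zero]

/-- Rows 1, 3, 4, 6 of `X` span its row space, and columns 2, 4, 5, 7 make them triangular. -/
theorem g2X_rank_of_f_zero {F : Type*} [Field F] {a : F} (h2 : (2 : F) ≠ 0) (ha : a ≠ 0)
    (b c d e : F) : (g2X a b c d e 0).rank = 4 := by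
  refine (g2_rank_iff (k := 4)
    !![1, 0, 0, 0; 0, -b/a, -c/a, (e-b*d/a+c^2/a)/a; 0, 1, 0, 0; 0, 0, 1, 0; 0, 0, 0, -b/a;
      0, 0, 0, 1; 0, 0, 0, 0]
    1
    !![0, a, b, 2*c, d, e, 0; 0, 0, 0, 2*a, 0, -c, -d; 0, 0, 0, 0, a, b, c; 0, 0, 0, 0, 0, 0, a]
    !![1, 0, 0, 0, 0, 0, 0; 0, 0, 1, 0, 0, 0, 0; 0, 0, 0, 1, 0, 0, 0; 0, 0, 0, 0, 0, 1, 0]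
    !![0, 0, 0, 0; 1, 0, 0, 0; 0, 0, 0, 0; 0, 1, 0, 0; 0, 0, 1, 0; 0, 0, 0, 0; 0, 0, 0, 1]
    ?_ ?_).2 (by simp)
  · ext i j
    fin_cases i <;> fin_cases j <;> simp [g2X, Matrix.mul_apply, Fin.sum_univ_succ] <;>
      field_simp <;> ring
  · intro _
    have key : ((!![1, 0, 0, 0, 0, 0, 0; 0, 0, 1, 0, 0, 0, 0; 0, 0, 0, 1, 0, 0, 0;
          0, 0, 0, 0, 0, 1, 0] : Matrix (Fin 4) (Fin 7) F) * g2X a b c d e 0 *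
        (!![0, 0, 0, 0; 1, 0, 0, 0; 0, 0, 0, 0; 0, 1, 0, 0; 0, 0, 1, 0; 0, 0, 0, 0; 0, 0, 0, 1] :
          Matrix (Fin 7) (Fin 4) F))
        = !![a, 2*c, d, 0; 0, 2*a, 0, -d; 0, 0, a, c; 0, 0, 0, a] := by
      ext i j
      fin_cases i <;> fin_cases j <;> simp [g2X, Matrix.mul_apply, Fin.sum_univ_succ]
    have hd : (!![a, 2*c, d, 0; 0, 2*a, 0, -d; 0, 0, a, c; 0, 0, 0, a] : Matrix _ _ F).det
        = 2 * a ^ 4 := by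
      simp [Matrix.det_succ_row_zero, Fin.sum_univ_succ, Fin.succAbove]
      ring
    rw [key, hd]
    exact mul_ne_zero h2 (pow_ne_zero _ ha)

/-- Row 2 of `X²` is a multiple of row 3, and subtracting a multiple of row 3 from row 1 leaves
only the stated scalar, in column 7. -/
theorem g2X_sq_rank_of_f_zero {F : Type*} [Field F] {a : F} (h2 : (2 : F) ≠ 0) (ha : a ≠ 0)
    (b c d e : F) :
    (g2X a b c d e 0 ^ 2).rank = 2 ↔ 2*(a*e-b*d+c^2) - c^2/2 ≠ 0 := by
  have hd (w : F) : (!![1, 0; 0, w] : Matrix _ _ F).det = w := by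
    rw [Matrix.det_fin_two_of]; ring
  refine (g2_rank_iff (k := 2) !![c/2, 1; -b, 0; a, 0; 0, 0; 0, 0; 0, 0; 0, 0]
    !![1, 0; 0, 2*(a*e-b*d+c^2) - c^2/2]
    !![0, 0, 0, 0, 2*a, 2*b, c; 0, 0, 0, 0, 0, 0, 1]
    !![0, 0, 1/a, 0, 0, 0, 0; 1, 0, -c/(2*a), 0, 0, 0, 0]
    !![0, 0; 0, 0; 0, 0; 0, 0; 1/(2*a), -c/(2*a); 0, 0; 0, 1] ?_ ?_).trans ?_
  · rw [g2X_sq]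
    ext i j
    fin_cases i <;> fin_cases j <;> simp [Matrix.mul_apply, Fin.sum_univ_succ] <;>
      field_simp <;> ring
  · intro h
    convert h
    rw [g2X_sq]
    ext i j
    fin_cases i <;> fin_cases j <;> simp [Matrix.mul_apply, Fin.sum_univ_succ] <;>
      field_simp <;> ring_nf <;> simp
  · rw [hd]

/-! ### Counting -/

theorem ncard_eq_of_invOn {α β : Type*} {S : Set α} {T : Set β} (f : α → β) (g : β → α)
    (hf : ∀ x ∈ S, f x ∈ T) (hg : ∀ y ∈ T, g y ∈ S) (hgf : ∀ x ∈ S, g (f x) = x)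
    (hfg : ∀ y ∈ T, f (g y) = y) : S.ncard = T.ncard :=
  Set.ncard_congr (fun x _ => f x) hf
    (fun x y hx hy h => by rw [← hgf x hx, ← hgf y hy, h])
    (fun y hy => ⟨g y, hg y hy, hfg y hy⟩)

theorem ncard_units {F : Type*} [Field F] [Fintype F] :
    ({x : F | x ≠ 0}).ncard = Fintype.card F - 1 := by
  have : ({x : F | x ≠ 0}) = {0}ᶜ := by ext; simp
  rw [this, Set.ncard_compl, Set.ncard_singleton, Nat.card_eq_fintype_card]

/-- The cuspidal cubic `u² = 4v³` is parametrised bijectively by `t ↦ (2t³, t²)`. -/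
theorem ncard_noncusp {F : Type*} [Field F] [Fintype F] (h2 : (2 : F) ≠ 0) :
    ({x : F × F | x.1 ^ 2 ≠ 4 * x.2 ^ 3}).ncard = Fintype.card F ^ 2 - Fintype.card F := by
  have h : ({x : F × F | x.1 ^ 2 ≠ 4 * x.2 ^ 3}) =
      (Set.range (fun t : F => (2 * t ^ 3, t ^ 2)))ᶜ := by
    ext ⟨u, v⟩
    simp only [Set.mem_ofPred_eq, Set.mem_compl_iff, ne_eq, not_iff_not, Set.mem_range,
      Prod.mk.injEq]
    constructor
    · intro h
      by_cases hv : v = 0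
      · subst hv
        have hu : u = 0 := by simpa using h
        exact ⟨0, by simp [hu], by simp⟩
      · have hu : u = 2 * v * (u / (2 * v)) := by field_simp
        set t := u / (2 * v)
        have ht : t ^ 2 = v := by
          have : (4 * v ^ 2) * (t ^ 2 - v) = 0 := by rw [hu] at h; linear_combination h
          have h4 : (4 * v ^ 2) ≠ 0 := by
            rw [show (4 : F) * v ^ 2 = (2 * v) ^ 2 by ring]
            exact pow_ne_zero _ (mul_ne_zero h2 hv)
          exact sub_eq_zero.1 ((mul_eq_zero.1 this).resolve_left h4)
        exact ⟨t, by rw [hu, ← ht]; ring, ht⟩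
    · rintro ⟨t, rfl, rfl⟩
      ring
  have hinj : Function.Injective (fun t : F => (2 * t ^ 3, t ^ 2)) := by
    intro s t hst
    simp only [Prod.mk.injEq, mul_right_inj' h2] at hst
    obtain ⟨h3, h2⟩ := hst
    by_cases ht : t = 0
    · subst ht
      simpa using h2
    · have : t ^ 2 * (s - t) = 0 := by linear_combination h3 - s * h2
      exact sub_eq_zero.1 ((mul_eq_zero.1 this).resolve_left (pow_ne_zero _ ht))
  rw [h, Set.ncard_compl, Set.ncard_range_of_injective hinj]
  simp [sq]

/-- The last condition is affine in `e` with invertible leading coefficient `2a`, so its left-hand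
side can replace `e` as a coordinate. -/
theorem ncard_a_ne_zero {F : Type*} [Field F] [Fintype F] (h2 : (2 : F) ≠ 0) :
    {v : F × F × F × F × F × F | v.1 ≠ 0 ∧ v.2.2.2.2.2 = 0 ∧
      2*(v.1*v.2.2.2.2.1-v.2.1*v.2.2.2.1+v.2.2.1^2) - v.2.2.1^2/2 ≠ 0}.ncard =
    (Fintype.card F - 1) * ((Fintype.card F - 1) *
      (Fintype.card F * (Fintype.card F * Fintype.card F))) := by
  rw [ncard_eq_of_invOn (T := {a : F | a ≠ 0} ×ˢ {w : F | w ≠ 0} ×ˢ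
      (Set.univ : Set F) ×ˢ (Set.univ : Set F) ×ˢ (Set.univ : Set F))
    (fun ⟨a, b, c, d, e, _⟩ => (a, 2*(a*e-b*d+c^2) - c^2/2, b, c, d))
    (fun ⟨a, w, b, c, d⟩ => (a, b, c, d, ((w + c^2/2)/2 + b*d - c^2)/a, 0))]
  · simp only [Set.ncard_prod, ncard_units, Set.ncard_univ, Nat.card_eq_fintype_card]
  · rintro ⟨a, b, c, d, e, f⟩ ⟨h, h', h''⟩
    exact ⟨h, h'', trivial, trivial, trivial⟩
  · rintro ⟨a, w, b, c, d⟩ ⟨ha, hw, -⟩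
    simp only [Set.mem_ofPred_eq] at ha hw ⊢
    refine ⟨ha, trivial, ?_⟩
    convert hw using 1
    field_simp
    ring
  · rintro ⟨a, b, c, d, e, f⟩ ⟨h, h', h''⟩
    simp only at h h' ⊢
    rw [h']
    simp only [Prod.mk.injEq, true_and, and_true]
    field_simp
    ring
  · rintro ⟨a, w, b, c, d⟩ ⟨ha, hw, -⟩
    simp only [Set.mem_ofPred_eq] at ha hw
    simp only [Prod.mk.injEq, true_and, and_true]
    field_simp
    ring

/-- The number of binary cubics of nonzero discriminant with `f ≠ 0` (with `b` and `e` free). The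
leading coefficients `v = b² + cf` and `u = f²d + 3bcf + 2b³` of its Hessian and cubic covariants are
coordinates replacing `c` and `d`, and `f²` times the discriminant is `u² - 4v³`. -/
theorem ncard_f_ne_zero {F : Type*} [Field F] [Fintype F] (h2 : (2 : F) ≠ 0) :
    {v : F × F × F × F × F × F | v.1 = 0 ∧ v.2.2.2.2.2 ≠ 0 ∧
      (v.2.1*v.2.2.1+v.2.2.2.1*v.2.2.2.2.2)^2 ≠
        4*(v.2.1^2+v.2.2.1*v.2.2.2.2.2)*(v.2.2.1^2-v.2.1*v.2.2.2.1)}.ncard =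
    (Fintype.card F - 1) * ((Fintype.card F ^ 2 - Fintype.card F) *
      (Fintype.card F * Fintype.card F)) := by
  rw [ncard_eq_of_invOn (T := {f : F | f ≠ 0} ×ˢ {x : F × F | x.1 ^ 2 ≠ 4 * x.2 ^ 3} ×ˢ
      (Set.univ : Set F) ×ˢ (Set.univ : Set F))
    (fun ⟨_, b, c, d, e, f⟩ => (f, (f^2*d+3*b*c*f+2*b^3, b^2+c*f), b, e))
    (fun ⟨f, ⟨u, v⟩, b, e⟩ =>
      (0, b, (v-b^2)/f, (u - 3*b*(v-b^2) - 2*b^3)/f^2, e, f))]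
  · simp only [Set.ncard_prod, ncard_units, ncard_noncusp h2, Set.ncard_univ,
      Nat.card_eq_fintype_card]
  · rintro ⟨a, b, c, d, e, f⟩ ⟨h, h', h''⟩
    refine ⟨h', ?_, trivial, trivial⟩
    simp only [Set.mem_ofPred_eq] at h' h'' ⊢
    intro hh
    apply h''
    rw [← sub_eq_zero]
    refine (mul_eq_zero.1 (?_ : f ^ 2 * _ = 0)).resolve_left (pow_ne_zero _ h')
    linear_combination hh
  · rintro ⟨f, ⟨u, v⟩, b, e⟩ ⟨hf, hw, -⟩
    simp only [Set.mem_ofPred_eq] at hf hw ⊢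
    refine ⟨trivial, hf, ?_⟩
    intro hh
    apply hw
    field_simp at hh
    linear_combination hh
  · rintro ⟨a, b, c, d, e, f⟩ ⟨h, h', h''⟩
    simp only at h h' ⊢
    rw [h]
    simp only [Prod.mk.injEq, true_and, and_true]
    constructor
    · field_simp
      ring
    · field_simp
      ring
  · rintro ⟨f, ⟨u, v⟩, b, e⟩ ⟨hf, hw, -⟩
    simp only [Set.mem_ofPred_eq] at hf hw
    simp only [Prod.mk.injEq, true_and, and_true]
    constructor
    · field_simp
      ring
    · field_simp
      ring

/-- For `f = 0` the discriminant condition reads `b² (4bd - 3c²) ≠ 0`, so `b ≠ 0` and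
`4bd - 3c²` can replace `d` as a coordinate. -/
theorem ncard_f_zero {F : Type*} [Field F] [Fintype F] (h2 : (2 : F) ≠ 0) :
    {v : F × F × F × F × F × F | v.1 = 0 ∧ v.2.2.2.2.2 = 0 ∧
      (v.2.1*v.2.2.1+v.2.2.2.1*v.2.2.2.2.2)^2 ≠
        4*(v.2.1^2+v.2.2.1*v.2.2.2.2.2)*(v.2.2.1^2-v.2.1*v.2.2.2.1)}.ncard =
    (Fintype.card F - 1) * ((Fintype.card F - 1) *
      (Fintype.card F * Fintype.card F)) := by
  have h4 : (4 : F) ≠ 0 := by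
    rw [show (4 : F) = 2 * 2 by norm_num]; exact mul_ne_zero h2 h2
  rw [ncard_eq_of_invOn (T := {b : F | b ≠ 0} ×ˢ {w : F | w ≠ 0} ×ˢ
      (Set.univ : Set F) ×ˢ (Set.univ : Set F))
    (fun ⟨_, b, c, d, e, _⟩ => (b, 4*b*d - 3*c^2, c, e))
    (fun ⟨b, w, c, e⟩ => (0, b, c, (w+3*c^2)/(4*b), e, 0))]
  · simp only [Set.ncard_prod, ncard_units, Set.ncard_univ, Nat.card_eq_fintype_card]
  · rintro ⟨a, b, c, d, e, f⟩ ⟨h, h', h''⟩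
    simp only at h' h''
    subst h'
    refine ⟨?_, ?_, trivial, trivial⟩
    · rintro (rfl : b = 0)
      simp at h''
    · intro hh
      simp only at hh
      apply h''
      linear_combination b^2 * hh
  · rintro ⟨b, w, c, e⟩ ⟨hb, hw, -⟩
    simp only [Set.mem_ofPred_eq] at hb hw ⊢
    refine ⟨trivial, trivial, ?_⟩
    intro hh
    apply hw
    refine (mul_eq_zero.1 (?_ : (4 * b ^ 2) ^ 2 * _ = 0)).resolve_left
      (pow_ne_zero _ (mul_ne_zero h4 (pow_ne_zero _ hb)))
    field_simp at hh
    linear_combination hh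
  · rintro ⟨a, b, c, d, e, f⟩ ⟨h, h', h''⟩
    simp only at h h' h'' ⊢
    subst h h'
    have hb : b ≠ 0 := by
      rintro rfl
      simp at h''
    simp only [Prod.mk.injEq, true_and, and_true]
    field_simp
    ring
  · rintro ⟨b, w, c, e⟩ ⟨hb, hw, -⟩
    simp only [Set.mem_ofPred_eq] at hb hw
    simp only [Prod.mk.injEq, true_and, and_true]
    field_simp
    ring

/-! ### The count -/

/-- The number of tuples `(a,b,c,d,e,f) ∈ F^6` such that `X = X(a,b,c,d,e,f)` has
`rank X = 4`, `rank X² = 2` and `X³ = 0` (i.e. `X` has Jordan type `(3,3,1)`)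
equals `q²·(q−1)²·(1+2q)`. -/
theorem g2_kirillov_331 (F : Type*) [Field F] [Fintype F]
    (q : ℕ) (hq : Fintype.card F = q) (hchar : 3 < ringChar F) :
    {v : F × F × F × F × F × F |
        (g2X v.1 v.2.1 v.2.2.1 v.2.2.2.1 v.2.2.2.2.1 v.2.2.2.2.2).rank = 4 ∧
        ((g2X v.1 v.2.1 v.2.2.1 v.2.2.2.1 v.2.2.2.2.1 v.2.2.2.2.2) ^ 2).rank = 2 ∧
        (g2X v.1 v.2.1 v.2.2.1 v.2.2.2.1 v.2.2.2.2.1 v.2.2.2.2.2) ^ 3 = 0}.ncard =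
      q ^ 2 * (q - 1) ^ 2 * (1 + 2 * q) := by
  classical
  have h2 : (2 : F) ≠ 0 := Ring.two_ne_zero (by omega)
  have cube (a b c d e f : F) : g2X a b c d e f ^ 3 = 0 ↔ a = 0 ∨ f = 0 := by
    rw [g2X_cube]
    constructor
    · intro h
      have h36 := congrFun (congrFun h 3) 6
      have h' : a ^ 2 * f = 0 := by simpa using h36
      simpa using h'
    · rintro (rfl | rfl) <;> simp
  have hS : {v : F × F × F × F × F × F |
        (g2X v.1 v.2.1 v.2.2.1 v.2.2.2.1 v.2.2.2.2.1 v.2.2.2.2.2).rank = 4 ∧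
        ((g2X v.1 v.2.1 v.2.2.1 v.2.2.2.1 v.2.2.2.2.1 v.2.2.2.2.2) ^ 2).rank = 2 ∧
        (g2X v.1 v.2.1 v.2.2.1 v.2.2.2.1 v.2.2.2.2.1 v.2.2.2.2.2) ^ 3 = 0} =
      {v : F × F × F × F × F × F | v.1 ≠ 0 ∧ v.2.2.2.2.2 = 0 ∧
        2*(v.1*v.2.2.2.2.1-v.2.1*v.2.2.2.1+v.2.2.1^2) - v.2.2.1^2/2 ≠ 0} ∪
      ({v : F × F × F × F × F × F | v.1 = 0 ∧ v.2.2.2.2.2 ≠ 0 ∧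
        (v.2.1*v.2.2.1+v.2.2.2.1*v.2.2.2.2.2)^2 ≠
          4*(v.2.1^2+v.2.2.1*v.2.2.2.2.2)*(v.2.2.1^2-v.2.1*v.2.2.2.1)} ∪
      {v : F × F × F × F × F × F | v.1 = 0 ∧ v.2.2.2.2.2 = 0 ∧
        (v.2.1*v.2.2.1+v.2.2.2.1*v.2.2.2.2.2)^2 ≠
          4*(v.2.1^2+v.2.2.1*v.2.2.2.2.2)*(v.2.2.1^2-v.2.1*v.2.2.2.1)}) := by
    ext ⟨a, b, c, d, e, f⟩
    simp only [Set.mem_union, Set.mem_ofPred_eq]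
    rw [cube]
    by_cases ha : a = 0
    · subst ha
      rw [g2X_sq_rank_of_a_zero]
      have := g2X_rank_of_a_zero b c d e f
      tauto
    · by_cases hf : f = 0
      · subst hf
        rw [g2X_sq_rank_of_f_zero h2 ha]
        have := g2X_rank_of_f_zero h2 ha b c d e
        tauto
      · tauto
  rw [hS, Set.ncard_union_eq, Set.ncard_union_eq, ncard_a_ne_zero h2, ncard_f_ne_zero h2,
    ncard_f_zero h2, hq]
  · have hpos : 0 < q := hq ▸ Fintype.card_pos
    obtain ⟨n, rfl⟩ : ∃ n, q = n + 1 := ⟨q - 1, by omega⟩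
    have hsub : (n + 1) ^ 2 - (n + 1) = n * (n + 1) := by
      rw [Nat.sub_eq_iff_eq_add (by nlinarith)]; ring
    rw [hsub, Nat.add_sub_cancel]
    ring
  · exact Set.disjoint_left.2 fun v h h' => h.2.1 h'.2.1
  · refine Set.disjoint_left.2 fun v h h' => ?_
    rcases h' with h' | h' <;> exact h.1 h'.1
end

section
/- The number of tuples (a,b,c,d,e,f) ∈ F^6 such that X = X(a,b,c,d,e,f) satisfies rank X = 2 and X² = 0 (equivalently, X has Jordan type the partition (2,2,1,1,1)) equals (q−1)·(1+q+q²). -/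
/-- The parametrization `(f, t, e) ↦ (a, b, c, d, e, f)` of the solutions of `X² = 0`. The parameter
`t` is the coordinate `b` when `f ≠ 0` and the coordinate `d` when `f = 0`; in the latter case
`-t ^ 2 / f = 0` by the convention for division by zero, as wanted. -/
noncomputable def g2Param {F : Type*} [Field F] (x : F × F × F) : F × F × F × F × F × F :=
  open Classical in
  (0, if x.1 = 0 then 0 else x.2.1, -x.2.1 ^ 2 / x.1,
    if x.1 = 0 then x.2.1 else x.2.1 ^ 3 / x.1 ^ 2, x.2.2, x.1)

theorem g2Param_injective {F : Type*} [Field F] : Function.Injective (g2Param (F := F)) := by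
  rintro ⟨f, t, e⟩ ⟨f', t', e'⟩ h
  simp only [g2Param, Prod.mk.injEq] at h ⊢
  obtain ⟨-, h1, -, h2, h3, rfl⟩ := h
  by_cases hf : f = 0 <;> simp_all

theorem g2X_sq_eq_zero_iff {F : Type*} [Field F] (h2 : (2 : F) ≠ 0) (a b c d e f : F) :
    g2X a b c d e f ^ 2 = 0 ↔
      a = 0 ∧ b ^ 2 = -(c * f) ∧ b * c = -(d * f) ∧ c ^ 2 = b * d := by
  constructor
  · intro h
    have key : ∀ i j, (g2X a b c d e f * g2X a b c d e f) i j = 0 := by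
      intro i j; rw [← pow_two, h]; rfl
    have e1 := key 2 4
    have e2 := key 1 5
    have e3 := key 0 5
    have e4 := key 0 6
    simp [g2X, Matrix.mul_apply, Fin.sum_univ_succ] at e1 e2 e3 e4
    have ha : a = 0 := by simpa [h2] using e1
    subst ha
    refine ⟨rfl, mul_left_cancel₀ h2 ?_, ?_, mul_left_cancel₀ h2 ?_⟩
    · linear_combination -e2
    · linear_combination e3
    · linear_combination e4
  · rintro ⟨rfl, h1, h3, h4⟩
    rw [pow_two]
    ext i j
    fin_cases i <;> fin_cases j <;>
      simp [g2X, Matrix.mul_apply, Fin.sum_univ_succ] <;> grind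

/-- A factorization through dimension two bounds the rank above, and a diagonal `2 × 2` block
with nonzero diagonal bounds it below. -/
theorem rank_eq_two_of_factor {F : Type*} [Field F] (X : Matrix (Fin 7) (Fin 7) F)
    (A : Matrix (Fin 7) (Fin 2) F) (B : Matrix (Fin 2) (Fin 7) F) (hX : X = A * B)
    (i j k l : Fin 7) (hik : X i k ≠ 0) (hjl : X j l ≠ 0) (hil : X i l = 0) (hjk : X j k = 0) :
    X.rank = 2 := by
  apply le_antisymm
  · rw [hX]
    exact (Matrix.rank_mul_le_left A B).trans (by simpa using A.rank_le_width)
  · have hu : IsUnit (X.submatrix ![i, j] ![k, l]) := by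
      rw [Matrix.isUnit_iff_isUnit_det, Matrix.det_fin_two]
      simp [hik, hjl, hil, hjk]
    have := Matrix.rank_of_isUnit _ hu
    calc 2 = (X.submatrix ![i, j] ![k, l]).rank := by simpa using this.symm
      _ ≤ X.rank := Matrix.rank_submatrix_le _ _ _

theorem g2X_rank_param {F : Type*} [Field F] (b c d e f : F)
    (h1 : b ^ 2 = -(c * f)) (h2 : b * c = -(d * f)) (h3 : c ^ 2 = b * d)
    (h0 : ¬ (b = 0 ∧ c = 0 ∧ d = 0 ∧ e = 0 ∧ f = 0)) :
    (g2X 0 b c d e f).rank = 2 := by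
  by_cases hf : f = 0
  · subst hf
    obtain rfl : b = 0 := by simpa using h1
    obtain rfl : c = 0 := by simpa using h3
    by_cases hd : d = 0
    · subst hd
      have he : e ≠ 0 := by simpa using h0
      refine rank_eq_two_of_factor _ !![1, 0; 0, 1; 0, 0; 0, 0; 0, 0; 0, 0; 0, 0]
        !![0, 0, 0, 0, 0, e, 0; 0, 0, 0, 0, 0, 0, e] ?_ 0 1 5 6 ?_ ?_ ?_ ?_
      · ext i j
        fin_cases i <;> fin_cases j <;> simp [g2X, Matrix.mul_apply]
      all_goals simp [g2X, he]
    · -- Rows `0` and `2` span the row space.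
      refine rank_eq_two_of_factor _ !![1, 0; 0, -e / d; 0, 1; 0, 0; 0, 0; 0, 0; 0, 0]
        !![0, 0, 0, 0, d, e, 0; 0, 0, 0, 0, 0, 0, -d] ?_ 0 2 4 6 ?_ ?_ ?_ ?_
      · ext i j
        fin_cases i <;> fin_cases j <;> simp [g2X, Matrix.mul_apply, hd]
      all_goals simp [g2X, hd]
  · -- Rows `1` and `4` span the row space.
    refine rank_eq_two_of_factor _
      !![b / f, e / f; 1, 0; 0, -c / f; 0, b / f; 0, 1; 0, 0; 0, 0]
      !![0, 0, f, -2 * b, -c, 0, e; 0, 0, 0, 0, 0, f, -b] ?_ 1 4 2 5 ?_ ?_ ?_ ?_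
    · ext i j
      fin_cases i <;> fin_cases j <;> simp [g2X, Matrix.mul_apply, hf] <;> grind
    all_goals simp [g2X, hf]

/-- The number of tuples `(a,b,c,d,e,f) ∈ F^6` such that `X = X(a,b,c,d,e,f)` has
`rank X = 2` and `X² = 0` (i.e. `X` has Jordan type `(2,2,1,1,1)`)
equals `(q−1)·(1+q+q²)`. -/
theorem g2_kirillov_22111 (F : Type*) [Field F] [Fintype F]
    (q : ℕ) (hq : Fintype.card F = q) (hchar : 3 < ringChar F) :
    {v : F × F × F × F × F × F |
        (g2X v.1 v.2.1 v.2.2.1 v.2.2.2.1 v.2.2.2.2.1 v.2.2.2.2.2).rank = 2 ∧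
        (g2X v.1 v.2.1 v.2.2.1 v.2.2.2.1 v.2.2.2.2.1 v.2.2.2.2.2) ^ 2 = 0}.ncard =
      (q - 1) * (1 + q + q ^ 2) := by
  classical
  have h2 : (2 : F) ≠ 0 := by
    intro h
    have hd : ringChar F ∣ 2 := (ringChar.spec F 2).1 (by exact_mod_cast h)
    have := Nat.le_of_dvd (by norm_num) hd
    omega
  have hset : {v : F × F × F × F × F × F |
        (g2X v.1 v.2.1 v.2.2.1 v.2.2.2.1 v.2.2.2.2.1 v.2.2.2.2.2).rank = 2 ∧
        (g2X v.1 v.2.1 v.2.2.1 v.2.2.2.1 v.2.2.2.2.1 v.2.2.2.2.2) ^ 2 = 0} =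
      g2Param '' {0}ᶜ := by
    ext ⟨a, b, c, d, e, f⟩
    simp only [Set.mem_ofPred_eq, Set.mem_image, Set.mem_compl_iff, Set.mem_singleton_iff,
      g2X_sq_eq_zero_iff h2]
    constructor
    · rintro ⟨hr, rfl, h1, h3, h4⟩
      refine ⟨(f, if f = 0 then d else b, e), ?_, ?_⟩
      · intro h
        simp only [Prod.mk_eq_zero] at h
        obtain ⟨rfl, h, rfl⟩ := h
        obtain rfl : d = 0 := by simpa using h
        obtain rfl : b = 0 := by simpa using h1
        obtain rfl : c = 0 := by simpa using h4
        have hz : g2X (0 : F) 0 0 0 0 0 = 0 := by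
          ext i j
          fin_cases i <;> fin_cases j <;> simp [g2X]
        simp [hz] at hr
      · by_cases hf : f = 0
        · subst hf
          obtain rfl : b = 0 := by simpa using h1
          obtain rfl : c = 0 := by simpa using h4
          simp [g2Param]
        · simp only [g2Param, hf, if_false, Prod.mk.injEq, true_and, and_true]
          constructor
          · field_simp
            linear_combination -h1
          · field_simp
            linear_combination b * h1 - f * h3
    · rintro ⟨⟨f', t, e'⟩, hx, h⟩
      simp only [g2Param, Prod.mk.injEq] at h
      obtain ⟨rfl, hb, hc, hd, rfl, rfl⟩ := h
      have hsol : b ^ 2 = -(c * f') ∧ b * c = -(d * f') ∧ c ^ 2 = b * d := by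
        by_cases hf : f' = 0
        · simp_all
          simp [← hb, ← hc]
        · simp only [hf, if_false] at hb hd
          subst hb hc hd
          refine ⟨?_, ?_, ?_⟩ <;> field_simp
      obtain ⟨h1, h3, h4⟩ := hsol
      refine ⟨g2X_rank_param _ _ _ _ _ h1 h3 h4 ?_, rfl, h1, h3, h4⟩
      rintro ⟨-, -, rfl, rfl, rfl⟩
      apply hx
      simpa using hd
  rw [hset, Set.ncard_image_of_injective _ g2Param_injective, Set.ncard_compl,
    Set.ncard_singleton, Nat.card_eq_fintype_card, Fintype.card_prod, Fintype.card_prod, hq]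
  have hq1 : 1 ≤ q := hq ▸ Fintype.card_pos
  obtain ⟨n, rfl⟩ := Nat.exists_eq_add_of_le hq1
  rw [Nat.add_sub_cancel_left, Nat.sub_eq_iff_eq_add (by nlinarith)]
  ring
end

section
/- For every tuple (a,b,c,d,e,f) ∈ F^6, the matrix X = X(a,b,c,d,e,f) satisfies X⁷ = 0, and the sequence (rank X, rank X², rank X³, rank X⁴, rank X⁵, rank X⁶) is one of the following five sequences: (6,5,4,3,2,1), (4,2,0,0,0,0), (4,1,0,0,0,0), (2,0,0,0,0,0), (0,0,0,0,0,0). In particular, the only Jordan types occurring among the matrices X(a,b,c,d,e,f) are the partitions (7), (3,3,1), (3,2,2), (2,2,1,1,1), and (1,1,1,1,1,1,1). -/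
namespace G2Rank

variable {F : Type*} [Field F]

theorem rank_le_of_eq_mul {r : ℕ} {M : Matrix (Fin 7) (Fin 7) F} (P : Matrix (Fin 7) (Fin r) F)
    (Q : Matrix (Fin r) (Fin 7) F) (h : M = P * Q) : M.rank ≤ r := by
  rw [h]
  exact (Matrix.rank_mul_le_left P Q).trans (Matrix.rank_le_width P)

theorem le_rank_of_minor {r : ℕ} {M : Matrix (Fin 7) (Fin 7) F} (u v : Fin r → Fin 7)
    (h : (M.submatrix u v).det ≠ 0) : r ≤ M.rank := by
  have h1 := Matrix.rank_of_det_ne_zero h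
  have h2 := Matrix.rank_submatrix_le M u v
  rw [h1, Fintype.card_fin] at h2
  exact h2

theorem one_le_rank {M : Matrix (Fin 7) (Fin 7) F} (i j : Fin 7) (h : M i j ≠ 0) :
    1 ≤ M.rank :=
  le_rank_of_minor ![i] ![j] (by rw [Matrix.det_fin_one]; exact h)

/-- If the rank did not drop, then `M ^ k = M * M ^ k * N` for some `N`, and iterating this
identity expresses `M ^ k` through arbitrarily high powers of `M`. -/
theorem rank_pow_succ_lt {M : Matrix (Fin 7) (Fin 7) F} {n k : ℕ} (hn : M ^ n = 0)
    (hk : M ^ k ≠ 0) : (M ^ (k + 1)).rank < (M ^ k).rank := by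
  by_contra! hle
  have hsub : LinearMap.range (M ^ (k + 1)).mulVecLin ≤ LinearMap.range (M ^ k).mulVecLin := by
    rintro _ ⟨v, rfl⟩
    exact ⟨M.mulVec v, by simp [pow_succ]⟩
  have heq := Submodule.eq_of_le_of_finrank_le hsub hle
  have hcol : ∀ j, ∃ w, (M ^ (k + 1)).mulVec w = (M ^ k).mulVec (Pi.single j 1) := by
    intro j
    have : (M ^ k).mulVecLin (Pi.single j 1) ∈ LinearMap.range (M ^ (k + 1)).mulVecLin := by
      rw [heq]
      exact ⟨_, rfl⟩
    exact this
  choose w hw using hcol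
  have hN : M ^ k = M * M ^ k * (Matrix.of w).transpose := by
    rw [← pow_succ']
    ext i j
    have := congrFun (hw j) i
    rw [Matrix.mulVec_single_one] at this
    exact this.symm
  have hiter : ∀ m, M ^ k = M ^ m * M ^ k * (Matrix.of w).transpose ^ m := by
    intro m
    induction m with
    | zero => simp
    | succ m ih =>
      calc M ^ k = M ^ m * (M * M ^ k * (Matrix.of w).transpose) * (Matrix.of w).transpose ^ m := by
            rw [← hN]; exact ih
        _ = _ := by rw [pow_succ M, pow_succ' (Matrix.of w).transpose]; simp only [mul_assoc]
  apply hk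
  rw [hiter n, hn, zero_mul, zero_mul]

theorem g2X_pow_seven (a b c d e f : F) : g2X a b c d e f ^ 7 = 0 := by
  have ht : (g2X a b c d e f).BlockTriangular id := by
    intro i j hij
    fin_cases i <;> fin_cases j <;> first | rfl | exact absurd hij (by decide)
  have h := Matrix.aeval_self_charpoly (g2X a b c d e f)
  rw [Matrix.charpoly_of_isUpperTriangular _ ht] at h
  have hd : ∀ i, g2X a b c d e f i i = 0 := by
    intro i
    fin_cases i <;> rfl
  simpa [hd] using h

theorem g2X_sq (a b c d e f : F) : g2X a b c d e f ^ 2 =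
    !![0, 0, a*f, 0, a*c, b*c + d*f, 2*a*e - 2*b*d + 2*c^2;
       0, 0, 0, 2*a*f, -2*a*b, -2*(b^2 + c*f), -(b*c + d*f);
       0, 0, 0, 0, 2*a^2, 2*a*b, a*c;
       0, 0, 0, 0, 0, a*f, 0;
       0, 0, 0, 0, 0, 0, a*f;
       0, 0, 0, 0, 0, 0, 0;
       0, 0, 0, 0, 0, 0, 0] := by
  rw [pow_two]
  ext i j
  fin_cases i <;> fin_cases j <;> simp [g2X, Matrix.mul_apply, Fin.sum_univ_succ] <;> ring

theorem g2X_cube_eq_zero (a b c d e f : F) (h : a * f = 0) : g2X a b c d e f ^ 3 = 0 := by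
  rw [pow_succ, g2X_sq, h]
  rcases mul_eq_zero.mp h with rfl | rfl <;> ext i j <;>
  fin_cases i <;> fin_cases j <;> simp [g2X, Matrix.mul_apply, Fin.sum_univ_succ] <;> ring_nf

theorem g2X_pow_six_corner (a b c d e f : F) :
    (g2X a b c d e f ^ 6) 0 6 = 2 * a ^ 4 * f ^ 2 := by
  have h : g2X a b c d e f ^ 6 =
      g2X a b c d e f ^ 2 * g2X a b c d e f ^ 2 * g2X a b c d e f ^ 2 := by
    simp only [← pow_add]
  rw [h, g2X_sq]
  simp [Matrix.mul_apply, Fin.sum_univ_succ]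
  ring

/-- The regular orbit. -/
theorem rank_regular (h2 : (2 : F) ≠ 0) (a b c d e f : F) (ha : a ≠ 0) (hf : f ≠ 0) :
    ∀ k ≤ 7, (g2X a b c d e f ^ k).rank = 7 - k := by
  have h7 := g2X_pow_seven a b c d e f
  have h6 : g2X a b c d e f ^ 6 ≠ 0 := by
    intro h
    have := g2X_pow_six_corner a b c d e f
    rw [h] at this
    have hne : 2 * a ^ 4 * f ^ 2 ≠ 0 := by positivity
    exact hne this.symm
  have hne : ∀ k ≤ 6, g2X a b c d e f ^ k ≠ 0 := by
    intro k hk h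
    apply h6
    rw [← Nat.sub_add_cancel hk, pow_add, h, mul_zero]
  have hlt : ∀ k ≤ 6, (g2X a b c d e f ^ (k + 1)).rank < (g2X a b c d e f ^ k).rank :=
    fun k hk => rank_pow_succ_lt h7 (hne k hk)
  have e0 : (g2X a b c d e f ^ 0).rank = 7 := by simp
  have e7 : (g2X a b c d e f ^ 7).rank = 0 := by simp [h7]
  have l0 := hlt 0 (by norm_num)
  have l1 := hlt 1 (by norm_num)
  have l2 := hlt 2 (by norm_num)
  have l3 := hlt 3 (by norm_num)
  have l4 := hlt 4 (by norm_num)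
  have l5 := hlt 5 (by norm_num)
  have l6 := hlt 6 (by norm_num)
  norm_num only at l0 l1 l2 l3 l4 l5 l6
  intro k hk
  interval_cases k <;> omega

/-- The case `f = 0`, `a ≠ 0`: rows `1` and `4` of `X` are combinations of rows `2`, `3`, `5`. -/
theorem rank_long_zero (h2 : (2 : F) ≠ 0) (a b c d e : F) (ha : a ≠ 0) :
    (g2X a b c d e 0).rank = 4 ∧ 1 ≤ (g2X a b c d e 0 ^ 2).rank ∧
      (g2X a b c d e 0 ^ 2).rank ≤ 2 := by
  refine ⟨le_antisymm ?_ ?_, ?_, ?_⟩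
  · refine rank_le_of_eq_mul
      !![1, 0, 0, 0; 0, -b/a, -c/a, (e - b*d/a + c^2/a)/a; 0, 1, 0, 0; 0, 0, 1, 0;
         0, 0, 0, -b/a; 0, 0, 0, 1; 0, 0, 0, 0]
      !![0, a, b, 2*c, d, e, 0;
         0, 0, 0, 2*a, 0, -c, -d;
         0, 0, 0, 0, a, b, c;
         0, 0, 0, 0, 0, 0, a] ?_
    ext i j
    fin_cases i <;> fin_cases j <;> simp [g2X, Matrix.mul_apply, Fin.sum_univ_succ] <;>
      field_simp <;> ring
  · refine le_rank_of_minor ![0, 2, 3, 5] ![1, 3, 4, 6] ?_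
    have : ((g2X a b c d e 0).submatrix ![0, 2, 3, 5] ![1, 3, 4, 6]).det = 2 * a ^ 4 := by
      simp only [Matrix.det_succ_row_zero (n := 3), Fin.sum_univ_four, Matrix.det_fin_three,
        Matrix.submatrix_apply]
      simp [g2X, Fin.succAbove]
      ring
    rw [this]
    positivity
  · refine one_le_rank 2 4 ?_
    rw [g2X_sq]
    change 2 * a ^ 2 ≠ 0
    positivity
  · rw [g2X_sq]
    refine rank_le_of_eq_mul
      !![c/(2*a), 2*a*e - 2*b*d + 2*c^2 - c^2/2; -b/a, 0; 1, 0; 0, 0; 0, 0; 0, 0; 0, 0]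
      !![0, 0, 0, 0, 2*a^2, 2*a*b, a*c; 0, 0, 0, 0, 0, 0, 1] ?_
    ext i j
    fin_cases i <;> fin_cases j <;> simp [Matrix.mul_apply, Fin.sum_univ_succ] <;>
      field_simp <;> ring

/-- The case `a = 0` with nonzero Hessian: the Hessian coefficient that does not vanish selects
the nonzero `4 × 4` minor. -/
theorem rank_short_zero (h2 : (2 : F) ≠ 0) (b c d e f : F)
    (h : b^2 + c*f ≠ 0 ∨ b*c + d*f ≠ 0 ∨ c^2 - b*d ≠ 0) :
    (g2X 0 b c d e f).rank = 4 ∧ 1 ≤ (g2X 0 b c d e f ^ 2).rank ∧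
      (g2X 0 b c d e f ^ 2).rank ≤ 2 := by
  refine ⟨le_antisymm ?_ ?_, ?_, ?_⟩
  · refine rank_le_of_eq_mul
      !![1, 0, 0, 0; 0, 1, 0, 0; 0, 0, -c, -d; 0, 0, b, c; 0, 0, f, -b; 0, 0, 0, 0; 0, 0, 0, 0]
      !![0, 0, b, 2*c, d, e, 0;
         0, 0, f, -2*b, -c, 0, e;
         0, 0, 0, 0, 0, 1, 0;
         0, 0, 0, 0, 0, 0, 1] ?_
    ext i j
    fin_cases i <;> fin_cases j <;> simp [g2X, Matrix.mul_apply, Fin.sum_univ_succ]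
  · rcases h with h | h | h
    · refine le_rank_of_minor ![0, 1, 3, 4] ![2, 3, 5, 6] ?_
      have : ((g2X 0 b c d e f).submatrix ![0, 1, 3, 4] ![2, 3, 5, 6]).det =
          2 * (b^2 + c*f) ^ 2 := by
        simp only [Matrix.det_succ_row_zero (n := 3), Fin.sum_univ_four, Matrix.det_fin_three,
          Matrix.submatrix_apply]
        simp [g2X, Fin.succAbove]
        ring
      rw [this]
      positivity
    · refine le_rank_of_minor ![0, 1, 2, 4] ![2, 4, 5, 6] ?_
      have : ((g2X 0 b c d e f).submatrix ![0, 1, 2, 4] ![2, 4, 5, 6]).det =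
          -(b*c + d*f) ^ 2 := by
        simp only [Matrix.det_succ_row_zero (n := 3), Fin.sum_univ_four, Matrix.det_fin_three,
          Matrix.submatrix_apply]
        simp [g2X, Fin.succAbove]
        ring
      rw [this]
      exact neg_ne_zero.mpr (pow_ne_zero 2 h)
    · refine le_rank_of_minor ![0, 1, 2, 3] ![3, 4, 5, 6] ?_
      have : ((g2X 0 b c d e f).submatrix ![0, 1, 2, 3] ![3, 4, 5, 6]).det =
          2 * (c^2 - b*d) ^ 2 := by
        simp only [Matrix.det_succ_row_zero (n := 3), Fin.sum_univ_four, Matrix.det_fin_three,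
          Matrix.submatrix_apply]
        simp [g2X, Fin.succAbove]
        ring
      rw [this]
      positivity
  · rw [g2X_sq]
    rcases h with h | h | h
    · refine one_le_rank 1 5 ?_
      change -2 * (b^2 + c*f) ≠ 0
      exact mul_ne_zero (neg_ne_zero.mpr h2) h
    · exact one_le_rank 0 5 h
    · refine one_le_rank 0 6 ?_
      change 2 * 0 * e - 2*b*d + 2*c^2 ≠ 0
      have : 2 * 0 * e - 2*b*d + 2*c^2 = 2 * (c^2 - b*d) := by ring
      rw [this]
      positivity
  · rw [g2X_sq]
    refine rank_le_of_eq_mul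
      !![1, 0; 0, 1; 0, 0; 0, 0; 0, 0; 0, 0; 0, 0]
      !![0, 0, 0, 0, 0, b*c + d*f, 2*0*e - 2*b*d + 2*c^2;
         0, 0, 0, 0, 0, -2*(b^2 + c*f), -(b*c + d*f)] ?_
    ext i j
    fin_cases i <;> fin_cases j <;> simp [Matrix.mul_apply, Fin.sum_univ_succ]

/-- The case `a = 0` with vanishing Hessian. For `f ≠ 0` the cubic is `f (x + (b/f) y)³`,
that is `c = -b²/f` and `d = b³/f²`, and every row is a combination of rows `1` and
`4`; for `f = 0` also `b = c = 0`. -/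
theorem rank_hessian_zero (b c d e f : F)
    (h1 : b^2 + c*f = 0) (h2 : b*c + d*f = 0) (h3 : c^2 - b*d = 0) :
    (g2X 0 b c d e f).rank = 2 ∨ g2X 0 b c d e f = 0 := by
  by_cases hf : f = 0
  · subst hf
    obtain rfl : b = 0 := by simpa using h1
    obtain rfl : c = 0 := by simpa using h3
    have hle : (g2X 0 0 0 d e 0).rank ≤ 2 := by
      by_cases hd : d = 0
      · subst hd
        refine rank_le_of_eq_mul
          !![1, 0; 0, 1; 0, 0; 0, 0; 0, 0; 0, 0; 0, 0]
          !![0, 0, 0, 0, 0, e, 0; 0, 0, 0, 0, 0, 0, e] ?_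
        ext i j
        fin_cases i <;> fin_cases j <;> simp [g2X, Matrix.mul_apply, Fin.sum_univ_succ]
      · refine rank_le_of_eq_mul
          !![1, 0; 0, e; 0, -d; 0, 0; 0, 0; 0, 0; 0, 0]
          !![0, 0, 0, 0, d, e, 0; 0, 0, 0, 0, 0, 0, 1] ?_
        ext i j
        fin_cases i <;> fin_cases j <;> simp [g2X, Matrix.mul_apply, Fin.sum_univ_succ]
    by_cases hd : d = 0
    · by_cases he : e = 0
      · right
        subst hd he
        ext i j
        fin_cases i <;> fin_cases j <;> simp [g2X]
      · left
        refine le_antisymm hle (le_rank_of_minor ![0, 1] ![5, 6] ?_)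
        rw [Matrix.det_fin_two]
        simp [g2X, he]
    · left
      refine le_antisymm hle (le_rank_of_minor ![0, 2] ![4, 6] ?_)
      rw [Matrix.det_fin_two]
      simp [g2X, hd]
  · left
    obtain rfl : c = -b^2/f := by field_simp; linear_combination h1
    obtain rfl : d = b^3/f^2 := by
      field_simp at h2 ⊢
      linear_combination h2
    refine le_antisymm ?_ (le_rank_of_minor ![1, 4] ![2, 5] ?_)
    · refine rank_le_of_eq_mul
        !![b/f, e/f; 1, 0; 0, b^2/f^2; 0, b/f; 0, 1; 0, 0; 0, 0]
        !![0, 0, f, -2*b, b^2/f, 0, e; 0, 0, 0, 0, 0, f, -b] ?_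
      ext i j
      fin_cases i <;> fin_cases j <;> simp [g2X, Matrix.mul_apply, Fin.sum_univ_succ] <;>
        field_simp <;> ring
    · rw [Matrix.det_fin_two]
      simp [g2X, hf]

end G2Rank

/-- Every matrix `X = X(a,b,c,d,e,f)` satisfies `X⁷ = 0`, and the rank sequence
`(rank X, rank X², …, rank X⁶)` is one of the five sequences
`(6,5,4,3,2,1)`, `(4,2,0,0,0,0)`, `(4,1,0,0,0,0)`, `(2,0,0,0,0,0)`, `(0,0,0,0,0,0)`;
so the only occurring Jordan types are `(7)`, `(3,3,1)`, `(3,2,2)`, `(2,2,1,1,1)`,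
`(1,1,1,1,1,1,1)`. -/
theorem g2_rank_sequences (F : Type*) [Field F] [Fintype F] (hchar : 3 < ringChar F)
    (a b c d e f : F) :
    (g2X a b c d e f) ^ 7 = 0 ∧
    ((g2X a b c d e f).rank, ((g2X a b c d e f) ^ 2).rank, ((g2X a b c d e f) ^ 3).rank,
        ((g2X a b c d e f) ^ 4).rank, ((g2X a b c d e f) ^ 5).rank,
        ((g2X a b c d e f) ^ 6).rank) ∈
      ({(6, 5, 4, 3, 2, 1), (4, 2, 0, 0, 0, 0), (4, 1, 0, 0, 0, 0),
        (2, 0, 0, 0, 0, 0), (0, 0, 0, 0, 0, 0)} : Set (ℕ × ℕ × ℕ × ℕ × ℕ × ℕ)) := by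
  have h2 : (2 : F) ≠ 0 := Ring.two_ne_zero (by omega)
  refine ⟨G2Rank.g2X_pow_seven a b c d e f, ?_⟩
  by_cases haf : a * f = 0
  · have h3 := G2Rank.g2X_cube_eq_zero a b c d e f haf
    have h4 := pow_eq_zero_of_le (show 3 ≤ 4 by norm_num) h3
    have h5 := pow_eq_zero_of_le (show 3 ≤ 5 by norm_num) h3
    have h6 := pow_eq_zero_of_le (show 3 ≤ 6 by norm_num) h3
    rw [h3, h4, h5, h6]
    have key : ((g2X a b c d e f).rank = 4 ∧ 1 ≤ (g2X a b c d e f ^ 2).rank ∧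
        (g2X a b c d e f ^ 2).rank ≤ 2) ∨
        (g2X a b c d e f ^ 2 = 0 ∧ ((g2X a b c d e f).rank = 2 ∨ g2X a b c d e f = 0)) := by
      by_cases ha : a = 0
      · subst ha
        by_cases hH : b^2 + c*f ≠ 0 ∨ b*c + d*f ≠ 0 ∨ c^2 - b*d ≠ 0
        · exact Or.inl (G2Rank.rank_short_zero h2 b c d e f hH)
        · push Not at hH
          obtain ⟨k1, k2, k3⟩ := hH
          refine Or.inr ⟨?_, G2Rank.rank_hessian_zero b c d e f k1 k2 k3⟩
          have k4 : 2 * 0 * e - 2*b*d + 2*c^2 = 0 := by linear_combination 2 * k3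
          rw [G2Rank.g2X_sq, k1, k2, k4]
          ext i j
          fin_cases i <;> fin_cases j <;> simp
      · obtain rfl : f = 0 := (mul_eq_zero.mp haf).resolve_left ha
        exact Or.inl (G2Rank.rank_long_zero h2 a b c d e ha)
    rcases key with ⟨r1, r2, r3⟩ | ⟨r2, r1 | r1⟩
    · obtain r | r : (g2X a b c d e f ^ 2).rank = 1 ∨ (g2X a b c d e f ^ 2).rank = 2 := by omega
      all_goals simp [r1, r]
    · simp [r1, r2]
    · simp [r1]
  · have hr := G2Rank.rank_regular h2 a b c d e f (left_ne_zero_of_mul haf)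
      (right_ne_zero_of_mul haf)
    have r1 := hr 1 (by norm_num)
    rw [pow_one] at r1
    simp [r1, hr]
end
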